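/- For all natural numbers p and q, the value f(p,q) is odd if and only if p = q; moreover, when p = q the value equals 1. -/

import Mathlib

/-!
The values of `f` have a closed form. Off the diagonal, `f p q = 2 * g p q`, where
`g p q = min p q ⌊2 (p + q - 1) / 5⌋` except that `g 1 2 = g 2 1 = 1`; on the diagonal `f p p = 1`.
The theorem is read off from this form, which is proved by induction on `p`: the closed form
satisfies the defining mex recursion.

* The value is not an option (`closedForm_not_isOption`). For `p = q`, an option is a xor of two
  diagonal values or of two even ones, hence even. For `p ≠ q`, an option with a diagonal summand
  is odd, and one without is `2 * (x ^^^ y) ≤ 2 * (x + y)` with `x`, `y` values of `g` at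
  points adding up to `(p - 1, q - 1)`. Since `2 (p + q - 2) - 4` is smaller than
  `2 (p + q) - 2` by `6 > 5`, the sum `x + y` is less than `g p q`; one use of the
  exceptional value still leaves a gap of `5`, and two uses have xor `0`.
* Every smaller number is an option (`isOption_of_lt`), by explicit witnesses when `p < q`.
  An odd number `2k + 1` comes from a diagonal summand `(a, a)` and a point of value `k` on the
  line through `(p, q)` parallel to the diagonal. An even number `2k` comes from a summand on an
  axis, of value `0`, and a point of the row `p - 1` or the column `q - 1`. These can miss only
  `k = g p q - 1` when `p + q ≡ 1 (mod 5)`, and there the exceptional points `(1, 2)` and `(2, 1)`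
  supply it, because `g p q - 2` is then even and `(g p q - 2) ^^^ 1 = g p q - 1`.
-/

/-- `mex S` is the least natural number not belonging to `S`. -/
noncomputable def mex (S : Set ℕ) : ℕ := sInf {n : ℕ | n ∉ S}

/-- `h 0 = 0` and `h n = 1` for all `n ≥ 1`. -/
def h : ℕ → ℕ
  | 0 => 0
  | _ + 1 => 1

/-- The nimber of the Circular sprout game `CS₄(𝒫₄ : p,1,q,1)`, defined by strong
recursion: `f p q` is the mex of the set consisting of `h p ^^^ h q` together with all
values `f p' q' ^^^ f (p-1-p') (q-1-q')` for `0 ≤ p' ≤ p-1` and `0 ≤ q' ≤ q-1`. -/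
noncomputable def f (p q : ℕ) : ℕ :=
  mex ({h p ^^^ h q} ∪
    ⋃ (p' : ℕ) (_ : p' < p) (q' : ℕ) (_ : q' < q),
      {f p' q' ^^^ f (p - 1 - p') (q - 1 - q')})
termination_by p
decreasing_by
  · omega
  · omega

/-- Half of the off-diagonal value of `f`. The truncated subtraction at `p = q = 0` is harmless,
since `g` is used only for `p ≠ q`. -/
def g (p q : ℕ) : ℕ :=
  if p + q = 3 ∧ p ≠ 0 ∧ q ≠ 0 then 1 else min (min p q) ((2 * (p + q) - 2) / 5)

/-- The closed form of `f`. -/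
def closedForm (p q : ℕ) : ℕ := if p = q then 1 else 2 * g p q

/-- `m` belongs to the set whose mex defines `f p q`, with `f` replaced by `closedForm`
and the positions `(a, b)`, `(c, d)` of the two summands treated symmetrically. -/
def IsOption (p q m : ℕ) : Prop :=
  m = h p ^^^ h q ∨ ∃ a b c d, a + c + 1 = p ∧ b + d + 1 = q ∧
    m = closedForm a b ^^^ closedForm c d

lemma mex_eq {S : Set ℕ} {n : ℕ} (hn : n ∉ S) (hlt : ∀ m < n, m ∈ S) : mex S = n := by
  apply le_antisymm
  · exact Nat.sInf_le hn
  · by_contra! hc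
    exact Nat.sInf_mem (s := {n : ℕ | n ∉ S}) ⟨n, hn⟩ (hlt _ hc)

lemma g_comm (p q : ℕ) : g p q = g q p := by
  unfold g; split_ifs <;> omega

lemma closedForm_comm (p q : ℕ) : closedForm p q = closedForm q p := by
  unfold closedForm; rw [g_comm]; simp only [eq_comm]

lemma IsOption.symm {p q m : ℕ} (H : IsOption p q m) : IsOption q p m := by
  rcases H with H | ⟨a, b, c, d, h1, h2, H⟩
  · left; rw [H, Nat.xor_comm]
  · right
    exact ⟨b, a, d, c, h2, h1, by rw [H, closedForm_comm a, closedForm_comm c]⟩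

lemma closedForm_diag (a : ℕ) : closedForm a a = 1 := by simp [closedForm]

lemma closedForm_of_ne {p q : ℕ} (H : p ≠ q) : closedForm p q = 2 * g p q := by
  simp [closedForm, H]

lemma two_mul_xor (a b : ℕ) : (2 * a) ^^^ (2 * b) = 2 * (a ^^^ b) := by
  have := Nat.shiftLeft_xor_distrib (a := a) (b := b) (i := 1)
  simp only [Nat.shiftLeft_eq, pow_one, mul_comm _ 2] at this
  exact this.symm

lemma one_xor_two_mul (a : ℕ) : 1 ^^^ (2 * a) = 2 * a + 1 := by
  rw [Nat.xor_comm]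
  exact Nat.xor_one_of_even (even_two_mul a)

lemma xor_le_sum (a b : ℕ) : a ^^^ b ≤ a + b := by
  induction a using Nat.strong_induction_on generalizing b with
  | _ a ih =>
  rcases Nat.eq_zero_or_pos a with rfl | ha
  · simp
  have h1 := ih (a / 2) (by omega) (b / 2)
  have h2 : (a ^^^ b) / 2 = a / 2 ^^^ b / 2 := Nat.xor_div_two
  have h3 : (a ^^^ b) % 2 = (a + b) % 2 := Nat.xor_mod_two_eq
  omega

lemma h_pos {p : ℕ} (hp : 0 < p) : h p = 1 := by
  cases p with
  | zero => omega
  | succ n => rfl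

/-- The bound behind `closedForm_not_isOption`: off-diagonal summands of an option of `(p, q)`,
`p ≠ q`, have xor less than `g p q`. -/
lemma xor_lt_g {a b c d : ℕ} (hab : a ≠ b) (hcd : c ≠ d) (hne : a + c ≠ b + d) :
    g a b ^^^ g c d < g (a + c + 1) (b + d + 1) := by
  by_cases hx : (a + b = 3 ∧ a ≠ 0 ∧ b ≠ 0) ∧ (c + d = 3 ∧ c ≠ 0 ∧ d ≠ 0)
  · -- two exceptional summands have xor `0`, although their sum reaches the bound
    have h1 : g a b = 1 := by simp [g, hx.1]
    have h2 : g c d = 1 := by simp [g, hx.2]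
    rw [h1, h2]
    simp only [Nat.xor_self]
    unfold g; split_ifs <;> omega
  · refine lt_of_le_of_lt (xor_le_sum _ _) ?_
    unfold g
    split_ifs <;> omega

lemma closedForm_not_isOption (p q : ℕ) : ¬ IsOption p q (closedForm p q) := by
  rintro (H | ⟨a, b, c, d, rfl, rfl, H⟩)
  · by_cases hpq : p = q
    · subst hpq
      simp [closedForm_diag] at H
    · rw [closedForm_of_ne hpq] at H
      rcases Nat.eq_zero_or_pos p with rfl | hp
      · rw [h_pos (p := q) (by omega)] at H
        simp [h] at H
      · rcases Nat.eq_zero_or_pos q with rfl | hq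
        · rw [h_pos hp] at H
          simp [h] at H
        · rw [h_pos hp, h_pos hq, Nat.xor_self] at H
          unfold g at H
          split_ifs at H <;> omega
  · by_cases hpq : a + c = b + d
    · rw [hpq, closedForm_diag] at H
      by_cases hab : a = b
      · obtain rfl : c = d := by omega
        subst hab
        simp [closedForm_diag] at H
      · rw [closedForm_of_ne hab, closedForm_of_ne (by omega), two_mul_xor] at H
        omega
    · rw [closedForm_of_ne (by omega)] at H
      by_cases hab : a = b
      · rw [hab, closedForm_diag, closedForm_of_ne (by omega), one_xor_two_mul] at H
        omega
      · by_cases hcd : c = d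
        · rw [hcd, closedForm_diag, closedForm_of_ne hab, Nat.xor_comm, one_xor_two_mul] at H
          omega
        · rw [closedForm_of_ne hab, closedForm_of_ne hcd, two_mul_xor] at H
          have := xor_lt_g hab hcd hpq
          omega

/-- Odd options: one summand lies on the diagonal, the other at `(i, i + (q - p))`. -/
lemma isOption_odd {p q k : ℕ} (hpq : p < q) (hk : k < g p q) : IsOption p q (2 * k + 1) := by
  -- a point of value `k` on the parallel to the diagonal
  obtain ⟨i, hi⟩ : ∃ i, i = max k ((5 * k + 5 - 2 * (q - p)) / 4) := ⟨_, rfl⟩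
  have hip : i + 1 ≤ p ∧ g i (i + (q - p)) = k := by
    unfold g at hk ⊢
    split_ifs at hk ⊢ <;> omega
  right
  refine ⟨p - 1 - i, p - 1 - i, i, i + (q - p), by omega, by omega, ?_⟩
  rw [closedForm_diag, closedForm_of_ne (by omega), hip.2, one_xor_two_mul]

lemma isOption_even {p q k : ℕ} (hpq : p < q) (hk : k < g p q) : IsOption p q (2 * k) := by
  have hp : 0 < p := by unfold g at hk; split_ifs at hk <;> omega
  -- it suffices to find two off-diagonal summands whose `g`-values have xor `k`
  have key : ∀ a b c d, a + c + 1 = p → b + d + 1 = q → a ≠ b → c ≠ d →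
      k = g a b ^^^ g c d → IsOption p q (2 * k) := by
    intro a b c d h1 h2 hab hcd H
    right
    refine ⟨a, b, c, d, h1, h2, ?_⟩
    rw [closedForm_of_ne hab, closedForm_of_ne hcd, two_mul_xor, H]
  rcases Nat.eq_zero_or_pos k with rfl | hk0
  · left
    rw [h_pos hp, h_pos (by omega)]
    rfl
  by_cases h1 : k + 2 ≤ p ∧ 5 * k + 8 ≤ 2 * (p + q)
  · -- a point of value `k` in the column `q - 1`
    obtain ⟨i, hi⟩ : ∃ i, i = max k ((5 * k + 1) / 2 + 2 - q) := ⟨_, rfl⟩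
    have hg : g i (q - 1) = k := by unfold g; split_ifs <;> omega
    have hg0 : g (p - 1 - i) 0 = 0 := by unfold g; split_ifs <;> omega
    exact key i (q - 1) (p - 1 - i) 0 (by omega) (by omega) (by omega) (by omega)
      (by rw [hg, hg0, Nat.xor_zero])
  by_cases h2 : 5 * k + 8 ≤ 2 * (p + q)
  · have hkp : k + 1 = p := by unfold g at hk; split_ifs at hk <;> omega
    have hg : g (p - 1) (q - 2) = k := by unfold g; split_ifs <;> omega
    have hg0 : g 0 1 = 0 := by decide
    exact key (p - 1) (q - 2) 0 1 (by omega) (by omega) (by omega) (by omega)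
      (by rw [hg, hg0, Nat.xor_zero])
  · -- only `5 * k + 7 = 2 * (p + q)` is left, so that `k` is odd
    have hk7 : 5 * k + 7 = 2 * (p + q) ∧ k + 1 ≤ p := by
      unfold g at hk; split_ifs at hk <;> omega
    have hxor : (k - 1) ^^^ 1 = k := by
      rw [Nat.xor_one_of_even (Nat.even_iff.2 (by omega))]
      omega
    by_cases hd : q = p + 1
    · have hg : g (p - 3) (q - 2) = k - 1 := by unfold g; split_ifs <;> omega
      have hg1 : g 2 1 = 1 := by decide
      exact key (p - 3) (q - 2) 2 1 (by omega) (by omega) (by omega) (by omega)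
        (by rw [hg, hg1, hxor])
    · have hg : g (p - 2) (q - 3) = k - 1 := by unfold g; split_ifs <;> omega
      have hg1 : g 1 2 = 1 := by decide
      exact key (p - 2) (q - 3) 1 2 (by omega) (by omega) (by omega) (by omega)
        (by rw [hg, hg1, hxor])

lemma isOption_of_lt {p q m : ℕ} (hm : m < closedForm p q) : IsOption p q m := by
  have key : ∀ {p q : ℕ}, p < q → m < closedForm p q → IsOption p q m := by
    intro p q hpq hm
    rw [closedForm_of_ne hpq.ne] at hm
    rcases Nat.even_or_odd' m with ⟨k, rfl | rfl⟩
    · exact isOption_even hpq (by omega)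
    · exact isOption_odd hpq (by omega)
  rcases lt_trichotomy p q with hpq | rfl | hpq
  · exact key hpq hm
  · left
    rw [closedForm_diag] at hm
    rw [Nat.xor_self]
    omega
  · exact (key hpq (by rwa [closedForm_comm])).symm

theorem f_eq_closedForm (p q : ℕ) : f p q = closedForm p q := by
  induction p using Nat.strong_induction_on generalizing q with
  | _ p ih =>
  have hmem : ∀ m, (m ∈ ({h p ^^^ h q} ∪ ⋃ (p' : ℕ) (_ : p' < p) (q' : ℕ) (_ : q' < q),
      {f p' q' ^^^ f (p - 1 - p') (q - 1 - q')} : Set ℕ)) ↔ IsOption p q m := by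
    intro m
    simp only [Set.mem_union, Set.mem_singleton_iff, Set.mem_iUnion, IsOption]
    refine or_congr Iff.rfl ⟨?_, ?_⟩
    · rintro ⟨p', hp, q', hq, H⟩
      rw [ih p' hp, ih (p - 1 - p') (by omega)] at H
      exact ⟨p', q', p - 1 - p', q - 1 - q', by omega, by omega, H⟩
    · rintro ⟨a, b, c, d, rfl, rfl, H⟩
      refine ⟨a, by omega, b, by omega, ?_⟩
      rw [ih a (by omega), ih _ (by omega), H]
      congr 2 <;> omega
  rw [f]
  apply mex_eq
  · rw [hmem]
    exact closedForm_not_isOption p q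
  · intro m hm
    rw [hmem]
    exact isOption_of_lt hm

theorem stmt12 (p q : ℕ) : (Odd (f p q) ↔ p = q) ∧ (p = q → f p q = 1) := by
  rw [f_eq_closedForm]
  by_cases hpq : p = q
  · subst hpq
    simp [closedForm_diag]
  · simp [closedForm_of_ne hpq, hpq]
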